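/- Let (X,𝔸,μ) be a finite measure space, τ : X → X an injective non-singular measurable transformation mapping measurable sets to measurable sets, φ an Orlicz function satisfying the Δ₂-condition for all s > 0, and h a weight function, and suppose the composition operator C_τ is a bounded linear operator on L^{φ,h}(μ). Then the following are equivalent: (a) C_τ is Li-Yorke chaotic on L^{φ,h}(μ); (b) there exists a measurable function g ∈ L^{φ,h}(μ), g ≠ 0, such that liminf_{n→∞} ‖C_τⁿ g‖_{φ,h} = 0; (c) there exists A ∈ 𝔸 with 0 < μ(A) < ∞ such that limsup_{n→∞} φ⁻¹(1/∫₀^{μ(τ⁻ⁿ(A))} h(t) dt) = ∞; (d) there exists A ∈ 𝔸 with 0 < μ(A) < ∞ such that limsup_{n→∞} φ⁻¹(1/∫₀^{μ(τⁿ(A))} h(t) dt) = ∞, where τⁿ(A) denotes the forward image of A under the n-fold iterate of τ; (e) there exists A ∈ 𝔸 with 0 < μ(A) < ∞ such that limsup_{n→∞} φ⁻¹(1/∫₀^{μ(τ⁻ⁿ(A))} h(t) dt) = ∞ and limsup_{n→∞} φ⁻¹(1/∫₀^{μ(τⁿ(A))} h(t) dt) = ∞; (f) there exists A ∈ 𝔸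 with 0 < μ(A) < ∞ such that liminf_{n→∞} φ⁻¹(1/∫₀^{μ(τ⁻ⁿ(A))} h(t) dt) > 0 and limsup_{n→∞} φ⁻¹(1/∫₀^{μ(τ⁻ⁿ(A))} h(t) dt) = ∞; (g) there exists a measurable set A with 0 < μ(A) < ∞ such that the characteristic function χ_A is a semi-irregular vector for C_τ on L^{φ,h}(μ). -/

import Mathlib

/-!
Every condition is reduced to a statement about measures of sets. By the `Δ₂`-condition `φ` is
finite, and the weight has a finite integral over `[0, μ(X)]`, so
`u ↦ φ⁻¹(1 / ∫₀ᵘ h)` is antitone, finite for `u > 0`, bounded below by a positive constant and tends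
to `∞` as `u → 0` (`limsup_orliczInv_eq_top_iff`). Conditions (c) and (f) thus both say that some
set `A` of positive measure has `liminf μ(τ⁻ⁿ A) = 0` (`PreSmall`), and (d) says that some `A` of
positive measure has `liminf μ(τⁿ A) = 0` (`ImgSmall`). Functions of small norm are small off a set
of small measure (`exists_norm_lt_imp`), so a nonzero `g` whose orbit has norms with `liminf` zero
has a level set that is `PreSmall`: (a), (b) and (g) each imply (c). Conversely, indicators of sets
of small measure have small norm (`exists_measure_lt_imp`).

The core is the Hajian–Kakutani construction. Since the finite measures `μ ∘ τ⁻ⁱ` are absolutely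
continuous with respect to `μ`, smallness of `μ(τ⁻ⁿ A)` passes to `n + 1, …, n + J`, and smallness of
`μ(τⁿ A)` passes to `n - 1, …, n - J`. Hence times `a₀ < a₁ < …` can be chosen inductively such that
removing from `A` all the sets `τ^{-(a_k - a_i)} A` (respectively `τ^{a_k - a_i} A`), `i < k`, leaves
a set `B` of positive measure, which is weakly wandering: `B ∩ τ^{-(a_k - a_i)} B = ∅`. By
injectivity, the sets `τ^{-a_k} B` are pairwise disjoint, and so are the sets `τ^{a_k} B`. As `μ` is
finite, both sequences of measures tend to zero, so `B` satisfies (e).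

Given such a set `W` with both properties, a union `A = ⋃ τ^{m_k} W` over very sparse times has
`μ(τ^{-p_k} A) → 0` for suitable intermediate times `p_k`, while `τ^{-m_k} A ⊇ W`
(`exists_oscillating`). The indicator of `A` is then semi-irregular, and its scalar multiples form
an uncountable scrambled set, which gives (g) and (a).
-/

open MeasureTheory Filter Set
open scoped ENNReal NNReal

noncomputable section

/-- The generalized inverse `φ⁻¹(u) = sup {s ≥ 0 : φ(s) ≤ u}` of an Orlicz function. -/
def orliczInv (φ : ℝ≥0∞ → ℝ≥0∞) (u : ℝ≥0∞) : ℝ≥0∞ :=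
  ⨆ (s : ℝ≥0) (_ : φ (s : ℝ≥0∞) ≤ u), (s : ℝ≥0∞)

/-- An Orlicz function: convex on `[0,∞)` (viewed inside `ℝ≥0∞`), vanishing at `0`,
tending to `∞` at `∞`, and finite at some positive point. -/
structure IsOrliczFunction (φ : ℝ≥0∞ → ℝ≥0∞) : Prop where
  map_zero : φ 0 = 0
  convex : ∀ (x y a b : ℝ≥0), a + b = 1 →
    φ ((a * x + b * y : ℝ≥0) : ℝ≥0∞) ≤ (a : ℝ≥0∞) * φ (x : ℝ≥0∞) + (b : ℝ≥0∞) * φ (y : ℝ≥0∞)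
  tendsto_top : Filter.Tendsto (fun s : ℝ≥0 => φ (s : ℝ≥0∞)) Filter.atTop (nhds ⊤)
  exists_pos_finite : ∃ s : ℝ≥0, 0 < s ∧ φ (s : ℝ≥0∞) < ⊤

/-- The Δ₂-condition for all `s > 0`: `φ(2s) ≤ M φ(s)` for some constant `M > 0`. -/
def Delta2All (φ : ℝ≥0∞ → ℝ≥0∞) : Prop :=
  ∃ M : ℝ≥0, 0 < M ∧ ∀ s : ℝ≥0, 0 < s →
    φ ((2 * s : ℝ≥0) : ℝ≥0∞) ≤ (M : ℝ≥0∞) * φ (s : ℝ≥0∞)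

variable {X : Type*}

/-- A weight function on `K = [0, μ(X)]`: measurable, positive, finite,
non-increasing and locally integrable on `K`. -/
structure IsWeight [MeasurableSpace X] (μ : Measure X) (h : ℝ → ℝ≥0∞) : Prop where
  measurable : Measurable h
  pos : ∀ t : ℝ, 0 ≤ t → ENNReal.ofReal t ≤ μ Set.univ → 0 < h t
  lt_top : ∀ t : ℝ, 0 ≤ t → ENNReal.ofReal t ≤ μ Set.univ → h t < ⊤
  antitone : ∀ s t : ℝ, 0 ≤ s → s ≤ t → ENNReal.ofReal t ≤ μ Set.univ → h t ≤ h s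
  locally_integrable : ∀ c : ℝ, 0 ≤ c → ENNReal.ofReal c ≤ μ Set.univ →
    (∫⁻ t in Set.Ioc (0 : ℝ) c, h t) < ⊤

/-- `∫₀^c h(t) dt`, for an extended-real upper limit `c`. -/
def weightInt (h : ℝ → ℝ≥0∞) (c : ℝ≥0∞) : ℝ≥0∞ :=
  ∫⁻ t in {t : ℝ | 0 < t ∧ ENNReal.ofReal t < c}, h t

/-- The non-increasing rearrangement `g*(t) = inf {λ : μ(|g| > λ) ≤ t}`. -/
def decRearr [MeasurableSpace X] (μ : Measure X) (g : X → ℝ) (t : ℝ) : ℝ≥0∞ :=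
  sInf {l : ℝ≥0∞ | μ {x | l < ENNReal.ofReal |g x|} ≤ ENNReal.ofReal t}

/-- The Orlicz–Lorentz modular `I_{φ,h}(c·g) = ∫_K φ(c g*(t)) h(t) dt`, `K = [0, μ(X)]`. -/
def olModular [MeasurableSpace X] (φ : ℝ≥0∞ → ℝ≥0∞) (h : ℝ → ℝ≥0∞) (μ : Measure X)
    (g : X → ℝ) (c : ℝ≥0∞) : ℝ≥0∞ :=
  ∫⁻ t in {t : ℝ | 0 < t ∧ ENNReal.ofReal t < μ Set.univ}, φ (c * decRearr μ g t) * h t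

/-- The Orlicz–Lorentz (Luxemburg) norm `‖g‖_{φ,h} = inf {λ > 0 : I_{φ,h}(g/λ) ≤ 1}`. -/
def olNorm [MeasurableSpace X] (φ : ℝ≥0∞ → ℝ≥0∞) (h : ℝ → ℝ≥0∞) (μ : Measure X)
    (g : X → ℝ) : ℝ≥0∞ :=
  sInf {l : ℝ≥0∞ | 0 < l ∧ olModular φ h μ g l⁻¹ ≤ 1}

/-- Membership in the Orlicz–Lorentz space `L^{φ,h}(μ)`. -/
def MemOL [MeasurableSpace X] (φ : ℝ≥0∞ → ℝ≥0∞) (h : ℝ → ℝ≥0∞) (μ : Measure X)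
    (g : X → ℝ) : Prop :=
  AEMeasurable g μ ∧ ∃ c : ℝ≥0, 0 < c ∧ olModular φ h μ g (c : ℝ≥0∞) < ⊤

/-- A non-singular measurable transformation: `μ(A) = 0 → μ(τ⁻¹(A)) = 0`. -/
def NonSingular [MeasurableSpace X] (μ : Measure X) (τ : X → X) : Prop :=
  Measurable τ ∧ ∀ A : Set X, MeasurableSet A → μ A = 0 → μ (τ ⁻¹' A) = 0

/-- The composition operator `C_τ g = g ∘ τ` is a bounded linear operator on `L^{φ,h}(μ)`. -/
def CompBoundedOL [MeasurableSpace X] (φ : ℝ≥0∞ → ℝ≥0∞) (h : ℝ → ℝ≥0∞) (μ : Measure X)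
    (τ : X → X) : Prop :=
  (∀ g : X → ℝ, MemOL φ h μ g → MemOL φ h μ (g ∘ τ)) ∧
  ∃ M : ℝ≥0∞, M < ⊤ ∧ ∀ g : X → ℝ, MemOL φ h μ g →
    olNorm φ h μ (g ∘ τ) ≤ M * olNorm φ h μ g

/-- `C_τ` is Li-Yorke chaotic on `L^{φ,h}(μ)`: there is an uncountable set `S` of
(representatives of pairwise distinct) points of `L^{φ,h}(μ)` such that every pair of
distinct points of `S` is a Li-Yorke pair for `C_τ`. -/
def LiYorkeOL [MeasurableSpace X] (φ : ℝ≥0∞ → ℝ≥0∞) (h : ℝ → ℝ≥0∞) (μ : Measure X)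
    (τ : X → X) : Prop :=
  ∃ S : Set (X → ℝ),
    (∀ g ∈ S, MemOL φ h μ g) ∧
    ¬ S.Countable ∧
    (∀ p ∈ S, ∀ q ∈ S, p ≠ q → ¬ p =ᵐ[μ] q) ∧
    ∀ p ∈ S, ∀ q ∈ S, p ≠ q →
      Filter.liminf (fun n : ℕ => olNorm φ h μ ((p - q) ∘ τ^[n])) Filter.atTop = 0 ∧
      0 < Filter.limsup (fun n : ℕ => olNorm φ h μ ((p - q) ∘ τ^[n])) Filter.atTop

/-- `g` is a semi-irregular vector for `C_τ` on `L^{φ,h}(μ)`. -/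
def SemiIrregularOL [MeasurableSpace X] (φ : ℝ≥0∞ → ℝ≥0∞) (h : ℝ → ℝ≥0∞) (μ : Measure X)
    (τ : X → X) (g : X → ℝ) : Prop :=
  MemOL φ h μ g ∧
  Filter.liminf (fun n : ℕ => olNorm φ h μ (g ∘ τ^[n])) Filter.atTop = 0 ∧
  0 < Filter.limsup (fun n : ℕ => olNorm φ h μ (g ∘ τ^[n])) Filter.atTop

/-! ### Sequences of measures of preimages and images -/

/-- For a measure `ν ≪ μ` with `ν` finite, sets of small `μ`-measure have small `ν`-measure;
here applied to the sum of the measures `μ ∘ τ⁻ⁱ`, `i ≤ J`. -/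
lemma exists_delta_preimage [MeasurableSpace X] {μ : Measure X} [IsFiniteMeasure μ] {τ : X → X}
    (hq : Measure.QuasiMeasurePreserving τ μ μ) (J : ℕ) {ε : ℝ≥0∞} (hε : 0 < ε) :
    ∃ δ > 0, ∀ s : Set X, μ s < δ → ∑ i ∈ Finset.range (J + 1), μ (τ^[i] ⁻¹' s) < ε := by
  set ν : Measure X := ∑ i ∈ Finset.range (J + 1), μ.map (τ^[i]) with hν
  have hac : ν ≪ μ := by
    intro s hs
    rw [hν, Measure.finsetSum_apply]
    exact Finset.sum_eq_zero fun i _ => (hq.iterate i).absolutelyContinuous hs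
  have : IsFiniteMeasure ν := by
    rw [hν]; infer_instance
  have hfin : ∫⁻ x, ν.rnDeriv μ x ∂μ ≠ ⊤ := (Measure.lintegral_rnDeriv_lt_top ν μ).ne
  obtain ⟨δ, hδ, hd⟩ := exists_pos_setLIntegral_lt_of_measure_lt hfin hε.ne'
  refine ⟨δ, hδ, fun s hs => ?_⟩
  have h1 := hd s hs
  rw [Measure.setLIntegral_rnDeriv hac, hν, Measure.finsetSum_apply] at h1
  refine lt_of_le_of_lt (Finset.sum_le_sum fun i _ => ?_) h1
  exact Measure.le_map_apply (hq.iterate i).aemeasurable s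

/-- The preimages of `A` under `τ^[n]` have measure arbitrarily close to `0` infinitely often. -/
def PreSmall [MeasurableSpace X] (μ : Measure X) (τ : X → X) (A : Set X) : Prop :=
  ∀ ε : ℝ≥0∞, 0 < ε → ∃ᶠ n : ℕ in atTop, μ (τ^[n] ⁻¹' A) < ε

/-- The forward images of `A` under `τ^[n]` have measure arbitrarily close to `0` infinitely
often. -/
def ImgSmall [MeasurableSpace X] (μ : Measure X) (τ : X → X) (A : Set X) : Prop :=
  ∀ ε : ℝ≥0∞, 0 < ε → ∃ᶠ n : ℕ in atTop, μ (τ^[n] '' A) < ε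

/-- If one preimage is small, so are the next few: smallness occurs along long windows. -/
lemma PreSmall.window [MeasurableSpace X] {μ : Measure X} [IsFiniteMeasure μ] {τ : X → X}
    (hq : Measure.QuasiMeasurePreserving τ μ μ) {A : Set X} (hA : PreSmall μ τ A) {ε : ℝ≥0∞}
    (hε : 0 < ε) (x : ℕ) :
    ∃ y, x < y ∧ μ (⋃ j ∈ Finset.range (x + 1), τ^[y - j] ⁻¹' A) < ε := by
  obtain ⟨δ, hδ, hd⟩ := exists_delta_preimage hq x hε
  obtain ⟨n, hn1, hn⟩ := (frequently_atTop.1 (hA δ hδ)) 1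
  refine ⟨n + x, by omega, ?_⟩
  refine lt_of_le_of_lt (measure_biUnion_finset_le _ _) (lt_of_eq_of_lt ?_ (hd _ hn))
  rw [← Finset.sum_range_reflect]
  refine Finset.sum_congr rfl fun j hj => ?_
  have hj' : j ≤ x := by simpa [Nat.lt_succ_iff] using hj
  have : n + x - (x + 1 - 1 - j) = n + j := by omega
  rw [this, Function.iterate_add, preimage_comp]

/-- If one forward image is small, so are the few preceding ones. -/
lemma ImgSmall.window [MeasurableSpace X] {μ : Measure X} [IsFiniteMeasure μ] {τ : X → X}
    (hq : Measure.QuasiMeasurePreserving τ μ μ) (hinj : Function.Injective τ)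
    {A : Set X} (hA : ImgSmall μ τ A) {ε : ℝ≥0∞} (hε : 0 < ε) (x : ℕ) :
    ∃ y, x < y ∧ μ (⋃ j ∈ Finset.range (x + 1), τ^[y - j] '' A) < ε := by
  obtain ⟨δ, hδ, hd⟩ := exists_delta_preimage hq x hε
  obtain ⟨n, hn1, hn⟩ := (frequently_atTop.1 (hA δ hδ)) (x + 1)
  refine ⟨n, by omega, ?_⟩
  refine lt_of_le_of_lt (measure_biUnion_finset_le _ _) (lt_of_eq_of_lt ?_ (hd _ hn))
  refine Finset.sum_congr rfl fun j hj => ?_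
  have hj' : j ≤ x := by simpa [Nat.lt_succ_iff] using hj
  have : τ^[n] = τ^[j] ∘ τ^[n - j] := by
    rw [← Function.iterate_add]; congr 1; omega
  rw [this, image_comp, preimage_image_eq _ (hinj.iterate j)]

/-- Dependent choice of a strictly increasing sequence. -/
lemma exists_strictMono_chain {R : ℕ → ℕ → ℕ → Prop} (hR : ∀ k x, ∃ y, x < y ∧ R k x y) :
    ∃ a : ℕ → ℕ, StrictMono a ∧ ∀ k, R k (a k) (a (k + 1)) := by
  choose f hf1 hf2 using hR
  let a : ℕ → ℕ := fun n => Nat.rec 0 (fun k x => f k x) n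
  exact ⟨a, strictMono_nat_of_lt_succ fun k => hf1 k (a k), fun k => hf2 k (a k)⟩

/-- A set `B` is weakly wandering along the increasing sequence `a`: no point of `B` returns to
`B` after `a k - a i` steps, `i < k`. For injective `τ` this makes both the preimages and the
forward images of `B` under the iterates `τ^[a k]` pairwise disjoint. -/
def WeaklyWandering (τ : X → X) (a : ℕ → ℕ) (B : Set X) : Prop :=
  ∀ i k, i < k → ∀ x ∈ B, τ^[a k - a i] x ∉ B

lemma frequently_lt_of_disjoint [MeasurableSpace X] {μ : Measure X} [IsFiniteMeasure μ]
    {a : ℕ → ℕ} (ha : StrictMono a) {s : ℕ → Set X} (hs : ∀ n, MeasurableSet (s n))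
    (hd : ∀ i k, i < k → Disjoint (s (a i)) (s (a k))) {ε : ℝ≥0∞} (hε : 0 < ε) :
    ∃ᶠ n : ℕ in atTop, μ (s n) < ε := by
  have hp : Pairwise (Function.onFun Disjoint fun k => s (a k)) := by
    intro i k hik
    rcases lt_or_gt_of_ne hik with h | h
    · exact hd i k h
    · exact (hd k i h).symm
  have ht : Tendsto (fun k => μ (s (a k))) atTop (nhds 0) := by
    apply ENNReal.tendsto_atTop_zero_of_tsum_ne_top
    rw [← measure_iUnion hp fun k => hs (a k)]
    exact measure_ne_top _ _
  exact ha.tendsto_atTop.frequently (ht.eventually_lt_const hε).frequently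

lemma WeaklyWandering.preSmall [MeasurableSpace X] {μ : Measure X} [IsFiniteMeasure μ] {τ : X → X}
    (hτ : Measurable τ) {a : ℕ → ℕ} (ha : StrictMono a) {B : Set X} (hB : MeasurableSet B)
    (hw : WeaklyWandering τ a B) : PreSmall μ τ B := by
  intro ε hε
  refine frequently_lt_of_disjoint ha (fun n => (hτ.iterate n) hB) (fun i k hik => ?_) hε
  rw [disjoint_left]
  intro x hx hx'
  refine hw i k hik _ hx ?_
  rw [← Function.iterate_add_apply, Nat.sub_add_cancel (ha hik).le]
  exact hx'

lemma measurableSet_image_iterate [MeasurableSpace X] {τ : X → X}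
    (himg : ∀ B : Set X, MeasurableSet B → MeasurableSet (τ '' B)) {B : Set X}
    (hB : MeasurableSet B) (n : ℕ) : MeasurableSet (τ^[n] '' B) := by
  induction n with
  | zero => simpa using hB
  | succ n ih => rw [Function.iterate_succ', image_comp]; exact himg _ ih

lemma WeaklyWandering.imgSmall [MeasurableSpace X] {μ : Measure X} [IsFiniteMeasure μ] {τ : X → X}
    (hinj : Function.Injective τ)
    (himg : ∀ B : Set X, MeasurableSet B → MeasurableSet (τ '' B))
    {a : ℕ → ℕ} (ha : StrictMono a) {B : Set X} (hB : MeasurableSet B)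
    (hw : WeaklyWandering τ a B) : ImgSmall μ τ B := by
  intro ε hε
  refine frequently_lt_of_disjoint ha (fun n => measurableSet_image_iterate himg hB n)
    (fun i k hik => ?_) hε
  rw [disjoint_left]
  rintro _ ⟨b, hb, rfl⟩ ⟨b', hb', h⟩
  refine hw i k hik b' hb' ?_
  have : τ^[a i] (τ^[a k - a i] b') = τ^[a i] b := by
    rw [← Function.iterate_add_apply, Nat.add_sub_cancel' (ha hik).le, h]
  rw [hinj.iterate _ this]
  exact hb

/-- Removing from `A` a sequence of sets of total measure less than `μ A` leaves a non-null set. -/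
lemma measure_diff_iUnion_pos [MeasurableSpace X] {μ : Measure X} {A : Set X}
    {U : ℕ → Set X} {ε : ℕ → ℝ≥0∞} (hU : ∀ k, μ (U k) < ε k) (hε : ∑' k, ε k < μ A) :
    0 < μ (A \ ⋃ k, U k) := by
  have h1 : μ (⋃ k, U k) < μ A :=
    lt_of_le_of_lt ((measure_iUnion_le _).trans (ENNReal.tsum_le_tsum fun k => (hU k).le)) hε
  exact lt_of_lt_of_le (tsub_pos_of_lt h1) le_measure_sdiff

/-- The Hajian–Kakutani construction: small preimages produce a weakly wandering set. -/
lemma PreSmall.exists_weaklyWandering [MeasurableSpace X] {μ : Measure X} [IsFiniteMeasure μ]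
    {τ : X → X} (hq : Measure.QuasiMeasurePreserving τ μ μ) {A : Set X} (hAm : MeasurableSet A)
    (hA0 : 0 < μ A) (hA : PreSmall μ τ A) :
    ∃ (B : Set X) (a : ℕ → ℕ), MeasurableSet B ∧ 0 < μ B ∧ StrictMono a ∧
      WeaklyWandering τ a B := by
  obtain ⟨ε, hε0, hε⟩ := ENNReal.exists_pos_sum_of_countable' hA0.ne' ℕ
  obtain ⟨a, ha, haR⟩ := exists_strictMono_chain fun k x => hA.window hq (hε0 k) x
  refine ⟨_, a, hAm.diff (MeasurableSet.iUnion fun k => Finset.measurableSet_biUnion _ fun j _ =>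
    (hq.measurable.iterate _) hAm), measure_diff_iUnion_pos haR hε, ha, ?_⟩
  rintro i k hik x ⟨-, hx⟩ ⟨hx', -⟩
  obtain ⟨k, rfl⟩ : ∃ m, k = m + 1 := ⟨k - 1, by omega⟩
  refine hx (mem_iUnion.2 ⟨k, mem_biUnion (x := a i) ?_ hx'⟩)
  have := ha.monotone (Nat.lt_succ_iff.1 hik)
  simpa [Nat.lt_succ_iff] using this

/-- The Hajian–Kakutani construction: small forward images produce a weakly wandering set. -/
lemma ImgSmall.exists_weaklyWandering [MeasurableSpace X] {μ : Measure X} [IsFiniteMeasure μ]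
    {τ : X → X} (hq : Measure.QuasiMeasurePreserving τ μ μ) (hinj : Function.Injective τ)
    (himg : ∀ B : Set X, MeasurableSet B → MeasurableSet (τ '' B))
    {A : Set X} (hAm : MeasurableSet A) (hA0 : 0 < μ A) (hA : ImgSmall μ τ A) :
    ∃ (B : Set X) (a : ℕ → ℕ), MeasurableSet B ∧ 0 < μ B ∧ StrictMono a ∧
      WeaklyWandering τ a B := by
  obtain ⟨ε, hε0, hε⟩ := ENNReal.exists_pos_sum_of_countable' hA0.ne' ℕ
  obtain ⟨a, ha, haR⟩ := exists_strictMono_chain fun k x => hA.window hq hinj (hε0 k) x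
  refine ⟨_, a, hAm.diff (MeasurableSet.iUnion fun k => Finset.measurableSet_biUnion _ fun j _ =>
    measurableSet_image_iterate himg hAm _), measure_diff_iUnion_pos haR hε, ha, ?_⟩
  rintro i k hik x ⟨hx, -⟩ ⟨-, hx'⟩
  obtain ⟨k, rfl⟩ : ∃ m, k = m + 1 := ⟨k - 1, by omega⟩
  refine hx' (mem_iUnion.2 ⟨k, mem_biUnion (x := a i) ?_ ⟨x, hx, rfl⟩⟩)
  have := ha.monotone (Nat.lt_succ_iff.1 hik)
  simpa [Nat.lt_succ_iff] using this

/-- From a set `W` whose preimages and images are both infinitely often small, a sparse union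
`A = ⋃ τ^[m k] '' W` has preimages that are infinitely often small, yet infinitely often contain
`W` and so do not tend to zero. -/
lemma exists_oscillating [MeasurableSpace X] {μ : Measure X} [IsFiniteMeasure μ]
    {τ : X → X} (hq : Measure.QuasiMeasurePreserving τ μ μ) (hinj : Function.Injective τ)
    (himg : ∀ B : Set X, MeasurableSet B → MeasurableSet (τ '' B))
    {W : Set X} (hWm : MeasurableSet W) (hW0 : 0 < μ W) (hpre : PreSmall μ τ W)
    (himgs : ImgSmall μ τ W) :
    ∃ A : Set X, MeasurableSet A ∧ 0 < μ A ∧ PreSmall μ τ A ∧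
      ∃ δ > 0, ∃ᶠ n : ℕ in atTop, δ ≤ μ (τ^[n] ⁻¹' A) := by
  obtain ⟨ε, hε0, hε⟩ := ENNReal.exists_pos_sum_of_countable' one_ne_zero ℕ
  -- Even steps make a forward window small, odd steps a backward one.
  let U : ℕ → ℕ → ℕ → Set X := fun k x y =>
    if Even k then ⋃ j ∈ Finset.range (x + 1), τ^[y - j] '' W
    else ⋃ j ∈ Finset.range (x + 1), τ^[y - j] ⁻¹' W
  have hU : ∀ k x, ∃ y, x < y ∧ μ (U k x y) < ε k := by
    intro k x
    by_cases hk : Even k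
    · simpa only [U, if_pos hk] using himgs.window hq hinj (hε0 k) x
    · simpa only [U, if_neg hk] using hpre.window hq (hε0 k) x
  obtain ⟨b, hb, hbU⟩ := exists_strictMono_chain hU
  set A : Set X := ⋃ k, τ^[b (2 * k + 1)] '' W with hA
  have hsub : ∀ k, W ⊆ τ^[b (2 * k + 1)] ⁻¹' A := fun k x hx =>
    mem_iUnion.2 ⟨k, x, hx, rfl⟩
  refine ⟨A, MeasurableSet.iUnion fun k => measurableSet_image_iterate himg hWm _, ?_, ?_,
    μ W, hW0, ?_⟩
  · rw [pos_iff_ne_zero]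
    intro h0
    have := measure_mono_null (hsub 0) ((hq.iterate _).preimage_null h0)
    exact hW0.ne' this
  · intro η hη
    have hsmall : ∀ k, μ (τ^[b (2 * k + 2)] ⁻¹' A) ≤ ∑' i, ε (i + (2 * k + 1)) := by
      intro k
      have hcov : τ^[b (2 * k + 2)] ⁻¹' A ⊆
          ⋃ i, U (i + (2 * k + 1)) (b (i + (2 * k + 1))) (b (i + (2 * k + 1) + 1)) := by
        intro x hx
        obtain ⟨j, w, hw, hwx⟩ := mem_iUnion.1 hx
        rcases le_or_gt j k with hjk | hjk
        · refine mem_iUnion.2 ⟨0, ?_⟩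
          have hodd : ¬ Even (0 + (2 * k + 1)) := by
            rw [Nat.not_even_iff_odd]; exact ⟨k, by omega⟩
          have hle : b (2 * j + 1) ≤ b (2 * k + 1) := hb.monotone (by omega)
          have hlt : b (2 * k + 1) < b (2 * k + 2) := hb (by omega)
          simp only [U, if_neg hodd]
          refine mem_biUnion (x := b (2 * j + 1)) (by simpa [Nat.lt_succ_iff] using hle) ?_
          have : τ^[b (2 * j + 1)] (τ^[b (2 * k + 2) - b (2 * j + 1)] x)
              = τ^[b (2 * j + 1)] w := by
            rw [← Function.iterate_add_apply, Nat.add_sub_cancel' (by omega), hwx]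
          have h2 := hinj.iterate _ this
          have h3 : 0 + (2 * k + 1) + 1 = 2 * k + 2 := by omega
          rw [mem_preimage, h3, h2]
          exact hw
        · refine mem_iUnion.2 ⟨2 * j - (2 * k + 1), ?_⟩
          have h3 : 2 * j - (2 * k + 1) + (2 * k + 1) = 2 * j := by omega
          have hle : b (2 * k + 2) ≤ b (2 * j) := hb.monotone (by omega)
          have hlt : b (2 * j) < b (2 * j + 1) := hb (by omega)
          rw [h3]
          simp only [U, if_pos (even_two_mul j)]
          refine mem_biUnion (x := b (2 * k + 2)) (by simpa [Nat.lt_succ_iff] using hle) ?_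
          refine ⟨w, hw, hinj.iterate (b (2 * k + 2)) ?_⟩
          rw [← Function.iterate_add_apply, Nat.add_sub_cancel' (by omega), hwx]
      refine (measure_mono hcov).trans ((measure_iUnion_le _).trans ?_)
      exact ENNReal.tsum_le_tsum fun i => (hbU _).le
    have ht := ENNReal.tendsto_sum_nat_add ε (hε.trans ENNReal.one_lt_top).ne
    have hsm : StrictMono fun k : ℕ => 2 * k + 1 := fun x y hxy => by simp only; omega
    have hsm2 : StrictMono fun k : ℕ => b (2 * k + 2) := fun x y hxy => hb (by omega)
    have hev := (ht.comp hsm.tendsto_atTop).eventually_lt_const hη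
    exact hsm2.tendsto_atTop.frequently
      (hev.mono fun k hk => (hsmall k).trans_lt hk).frequently
  · have hsm2 : StrictMono fun k : ℕ => b (2 * k + 1) := fun x y hxy => hb (by omega)
    exact hsm2.tendsto_atTop.frequently
      (Eventually.of_forall fun k => measure_mono (hsub k)).frequently

/-! ### Orlicz functions and weights -/

lemma IsOrliczFunction.mul_le {φ : ℝ≥0∞ → ℝ≥0∞} (hφ : IsOrliczFunction φ) {a : ℝ≥0} (ha : a ≤ 1)
    (y : ℝ≥0) : φ ((a * y : ℝ≥0) : ℝ≥0∞) ≤ a * φ y := by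
  have := hφ.convex y 0 a (1 - a) (add_tsub_cancel_of_le ha)
  simpa [hφ.map_zero] using this

lemma IsOrliczFunction.mono {φ : ℝ≥0∞ → ℝ≥0∞} (hφ : IsOrliczFunction φ) {x y : ℝ≥0∞}
    (hxy : x ≤ y) (hy : y ≠ ⊤) : φ x ≤ φ y := by
  lift y to ℝ≥0 using hy
  lift x to ℝ≥0 using ne_top_of_le_ne_top ENNReal.coe_ne_top hxy
  have hxy' : x ≤ y := by exact_mod_cast hxy
  rcases eq_or_ne y 0 with rfl | hy0
  · have : x = 0 := by simpa using hxy'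
    rw [this]
  have h1 : x / y ≤ 1 := div_le_one_of_le₀ hxy' zero_le
  have h2 := hφ.mul_le h1 y
  rw [div_mul_cancel₀ _ hy0] at h2
  refine h2.trans ?_
  calc ((x / y : ℝ≥0) : ℝ≥0∞) * φ y ≤ 1 * φ y := by gcongr; exact_mod_cast h1
    _ = φ y := one_mul _

lemma IsOrliczFunction.lt_top {φ : ℝ≥0∞ → ℝ≥0∞} (hφ : IsOrliczFunction φ) (hΔ : Delta2All φ)
    (y : ℝ≥0) : φ y < ⊤ := by
  obtain ⟨s, hs, hsf⟩ := hφ.exists_pos_finite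
  obtain ⟨M, hM, hMφ⟩ := hΔ
  have key : ∀ n : ℕ, φ ((2 ^ n * s : ℝ≥0) : ℝ≥0∞) < ⊤ := by
    intro n
    induction n with
    | zero => simpa using hsf
    | succ n ih =>
      have := hMφ (2 ^ n * s) (by positivity)
      rw [← mul_assoc, ← pow_succ'] at this
      exact this.trans_lt (ENNReal.mul_lt_top ENNReal.coe_lt_top ih)
  obtain ⟨n, hn⟩ := pow_unbounded_of_one_lt (y / s) (one_lt_two (α := ℝ≥0))
  refine lt_of_le_of_lt (hφ.mono ?_ ENNReal.coe_ne_top) (key n)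
  rw [div_lt_iff₀ hs] at hn
  exact_mod_cast hn.le

lemma orliczInv_mono (φ : ℝ≥0∞ → ℝ≥0∞) {u v : ℝ≥0∞} (h : u ≤ v) :
    orliczInv φ u ≤ orliczInv φ v :=
  iSup_mono fun _ => iSup_mono' fun hs => ⟨hs.trans h, le_rfl⟩

lemma IsOrliczFunction.orliczInv_lt_top {φ : ℝ≥0∞ → ℝ≥0∞} (hφ : IsOrliczFunction φ) {v : ℝ≥0∞}
    (hv : v < ⊤) : orliczInv φ v < ⊤ := by
  obtain ⟨N, hN⟩ := eventually_atTop.1 (hφ.tendsto_top.eventually_const_lt hv)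
  refine lt_of_le_of_lt (iSup₂_le fun s hs => ?_) (ENNReal.coe_lt_top (r := N))
  by_contra hlt
  have : N ≤ s := by
    rw [not_le] at hlt; exact_mod_cast hlt.le
  exact absurd (hN s this) (not_lt.2 hs)

lemma IsOrliczFunction.orliczInv_pos {φ : ℝ≥0∞ → ℝ≥0∞} (hφ : IsOrliczFunction φ) {v : ℝ≥0∞}
    (hv : 0 < v) : 0 < orliczInv φ v := by
  obtain ⟨s, hs, hsf⟩ := hφ.exists_pos_finite
  obtain ⟨a, ha, hav⟩ : ∃ a : ℝ≥0, (0 < a ∧ a ≤ 1) ∧ (a : ℝ≥0∞) * φ s ≤ v := by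
    have ht : Tendsto (fun a : ℝ≥0 => (a : ℝ≥0∞) * φ s) (nhds 0) (nhds 0) := by
      have h1 : Tendsto (fun a : ℝ≥0 => (a : ℝ≥0∞)) (nhds 0) (nhds 0) := by
        exact_mod_cast ENNReal.continuous_coe.tendsto 0
      simpa using ENNReal.Tendsto.mul_const h1 (Or.inr hsf.ne)
    have h2 := (ht.eventually_lt_const hv).filter_mono (nhdsWithin_le_nhds (s := Ioi 0))
    have h3 : ∀ᶠ a : ℝ≥0 in nhdsWithin 0 (Ioi 0), 0 < a ∧ a ≤ 1 := by
      filter_upwards [self_mem_nhdsWithin,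
        nhdsWithin_le_nhds (Iic_mem_nhds (zero_lt_one (α := ℝ≥0)))] with a h h'
      exact ⟨h, h'⟩
    obtain ⟨a, h, h'⟩ := (h3.and h2).exists
    exact ⟨a, h, h'.le⟩
  have hle : ((a * s : ℝ≥0) : ℝ≥0∞) ≤ orliczInv φ v :=
    le_iSup₂_of_le (a * s) ((hφ.mul_le ha.2 s).trans hav) le_rfl
  refine lt_of_lt_of_le ?_ hle
  exact_mod_cast mul_pos ha.1 hs

lemma weightInt_mono (h : ℝ → ℝ≥0∞) {u v : ℝ≥0∞} (huv : u ≤ v) :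
    weightInt h u ≤ weightInt h v :=
  lintegral_mono_set fun _ ht => ⟨ht.1, ht.2.trans_le huv⟩

lemma subset_Ioc_of_finite {m : ℝ≥0∞} (hm : m ≠ ⊤) :
    {t : ℝ | 0 < t ∧ ENNReal.ofReal t < m} ⊆ Ioc 0 m.toReal := fun t ht =>
  ⟨ht.1, ((ENNReal.ofReal_lt_iff_lt_toReal ht.1.le hm).1 ht.2).le⟩

lemma IsWeight.weightInt_lt_top [MeasurableSpace X] {μ : Measure X} [IsFiniteMeasure μ]
    {h : ℝ → ℝ≥0∞} (hh : IsWeight μ h) : weightInt h (μ univ) < ⊤ :=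
  (lintegral_mono_set (subset_Ioc_of_finite (measure_ne_top μ univ))).trans_lt
    (hh.locally_integrable _ ENNReal.toReal_nonneg (ENNReal.ofReal_toReal_le))

lemma IsWeight.weightInt_pos [MeasurableSpace X] {μ : Measure X} [IsFiniteMeasure μ]
    {h : ℝ → ℝ≥0∞} (hh : IsWeight μ h) (hμ : 0 < μ univ) {u : ℝ≥0∞} (hu : 0 < u) :
    0 < weightInt h u := by
  set v := min u (μ univ) with hv
  have hvt : v ≠ ⊤ := ne_top_of_le_ne_top (measure_ne_top μ univ) (min_le_right _ _)
  have hv0 : 0 < v.toReal := ENNReal.toReal_pos (lt_min hu hμ).ne' hvt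
  refine lt_of_lt_of_le ?_ (weightInt_mono h (min_le_left u (μ univ)))
  rw [weightInt, setLIntegral_pos_iff hh.measurable]
  have hsub : Ioo 0 v.toReal ⊆ Function.support h ∩ {t : ℝ | 0 < t ∧ ENNReal.ofReal t < v} := by
    intro t ht
    have h1 : ENNReal.ofReal t < v := (ENNReal.ofReal_lt_iff_lt_toReal ht.1.le hvt).2 ht.2
    exact ⟨(hh.pos t ht.1.le (h1.le.trans (min_le_right _ _))).ne', ht.1, h1⟩
  refine lt_of_lt_of_le ?_ (measure_mono hsub)
  simpa using hv0

lemma IsWeight.weightInt_small [MeasurableSpace X] {μ : Measure X} [IsFiniteMeasure μ]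
    {h : ℝ → ℝ≥0∞} (hh : IsWeight μ h) {ε : ℝ≥0∞} (hε : 0 < ε) :
    ∃ δ > 0, ∀ u ≤ μ univ, u < δ → weightInt h u < ε := by
  have hfin : ∫⁻ t in Ioc 0 (μ univ).toReal, h t ≠ ⊤ :=
    (hh.locally_integrable _ ENNReal.toReal_nonneg (ENNReal.ofReal_toReal_le)).ne
  obtain ⟨δ, hδ, hd⟩ := exists_pos_setLIntegral_lt_of_measure_lt hfin hε.ne'
  refine ⟨δ, hδ, fun u hu huδ => ?_⟩
  have hut : u ≠ ⊤ := ne_top_of_le_ne_top (measure_ne_top μ univ) hu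
  have hms : MeasurableSet {t : ℝ | 0 < t ∧ ENNReal.ofReal t < u} :=
    measurableSet_Ioi.inter (measurableSet_lt ENNReal.measurable_ofReal measurable_const)
  have hsub : {t : ℝ | 0 < t ∧ ENNReal.ofReal t < u} ⊆ Ioc 0 (μ univ).toReal := fun t ht =>
    subset_Ioc_of_finite (measure_ne_top μ univ) ⟨ht.1, ht.2.trans_le hu⟩
  have h1 := hd {t : ℝ | 0 < t ∧ ENNReal.ofReal t < u} ?_
  · rwa [Measure.restrict_restrict hms, inter_eq_left.2 hsub] at h1
  · refine lt_of_le_of_lt (Measure.restrict_apply_le _ _) (lt_of_le_of_lt ?_ huδ)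
    refine (measure_mono (subset_Ioc_of_finite hut)).trans ?_
    rw [Real.volume_Ioc, sub_zero]
    exact ENNReal.ofReal_toReal_le

/-- Since `u ↦ φ⁻¹(1 / ∫₀ᵘ h)` is antitone, finite for `u > 0` and tends to `∞` as `u → 0`, its
values along a sequence are unbounded exactly when the sequence comes arbitrarily close to `0`. -/
lemma limsup_orliczInv_eq_top_iff [MeasurableSpace X] {μ : Measure X} [IsFiniteMeasure μ]
    {φ : ℝ≥0∞ → ℝ≥0∞} {h : ℝ → ℝ≥0∞} (hφ : IsOrliczFunction φ) (hΔ : Delta2All φ)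
    (hh : IsWeight μ h) (hμ : 0 < μ univ) {u : ℕ → ℝ≥0∞} (hu : ∀ n, u n ≤ μ univ) :
    limsup (fun n => orliczInv φ (weightInt h (u n))⁻¹) atTop = ⊤ ↔
      ∀ ε : ℝ≥0∞, 0 < ε → ∃ᶠ n in atTop, u n < ε := by
  constructor
  · intro hl ε hε
    by_contra hcon
    rw [not_frequently] at hcon
    have h1 : limsup (fun n => orliczInv φ (weightInt h (u n))⁻¹) atTop
        ≤ orliczInv φ (weightInt h ε)⁻¹ := by
      refine limsup_le_of_le (by isBoundedDefault) (hcon.mono fun n hn => ?_)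
      exact orliczInv_mono φ (ENNReal.inv_le_inv.2 (weightInt_mono h (not_lt.1 hn)))
    have h2 := hφ.orliczInv_lt_top (ENNReal.inv_lt_top.2 (hh.weightInt_pos hμ hε))
    rw [hl] at h1
    exact absurd h2 (not_lt.2 h1)
  · intro hs
    refine ENNReal.eq_top_of_forall_nnreal_le fun C => ?_
    obtain ⟨δ, hδ, hd⟩ := hh.weightInt_small (ENNReal.inv_pos.2 (hφ.lt_top hΔ C).ne)
    refine le_limsup_of_frequently_le ((hs δ hδ).mono fun n hn => ?_) (by isBoundedDefault)
    refine le_iSup₂_of_le C ?_ le_rfl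
    exact ENNReal.le_inv_iff_le_inv.1 (hd _ (hu n) hn).le

/-! ### The Orlicz–Lorentz norm -/

lemma decRearr_lt_top [MeasurableSpace X] {μ : Measure X} [IsFiniteMeasure μ] {g : X → ℝ}
    (hg : AEMeasurable g μ) {t : ℝ} (ht : 0 < t) : decRearr μ g t < ⊤ := by
  have hanti : Antitone fun n : ℕ => {x | (n : ℝ≥0∞) < ENNReal.ofReal |g x|} := by
    intro m n hmn x hx
    exact lt_of_le_of_lt (Nat.cast_le.2 hmn) (show (n : ℝ≥0∞) < ENNReal.ofReal |g x| from hx)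
  have hempty : ⋂ n : ℕ, {x | (n : ℝ≥0∞) < ENNReal.ofReal |g x|} = ∅ := by
    refine eq_empty_of_forall_notMem fun x hx => ?_
    obtain ⟨n, hn⟩ := ENNReal.exists_nat_gt (ENNReal.ofReal_ne_top (r := |g x|))
    exact absurd (mem_iInter.1 hx n) (not_lt.2 hn.le)
  have htend := tendsto_measure_iInter_atTop (μ := μ)
    (s := fun n : ℕ => {x | (n : ℝ≥0∞) < ENNReal.ofReal |g x|})
    (fun n => nullMeasurableSet_lt aemeasurable_const
      (by simpa only [Real.norm_eq_abs] using hg.norm.ennreal_ofReal)) hanti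
    ⟨0, measure_ne_top _ _⟩
  rw [hempty, measure_empty] at htend
  obtain ⟨n, hn⟩ := (htend.eventually_lt_const (ENNReal.ofReal_pos.2 ht)).exists
  exact (sInf_le (show (n : ℝ≥0∞) ∈ _ from hn.le)).trans_lt (ENNReal.natCast_lt_top n)

lemma le_decRearr [MeasurableSpace X] {μ : Measure X} {g : X → ℝ} {t : ℝ} {δ : ℝ≥0∞}
    (h : ENNReal.ofReal t < μ {x | δ < ENNReal.ofReal |g x|}) : δ ≤ decRearr μ g t := by
  refine le_sInf fun l hl => ?_
  by_contra hlt
  rw [not_le] at hlt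
  refine absurd h (not_lt.2 (le_trans (measure_mono fun x hx => ?_) hl))
  exact hlt.trans hx

/-- A Chebyshev-type inequality in qualitative form: a function of small norm is bounded by `δ`
off a set of small measure. -/
lemma exists_norm_lt_imp [MeasurableSpace X] {μ : Measure X} [IsFiniteMeasure μ]
    {φ : ℝ≥0∞ → ℝ≥0∞} {h : ℝ → ℝ≥0∞} (hφ : IsOrliczFunction φ)
    (hh : IsWeight μ h) {δ : ℝ≥0} (hδ : 0 < δ) {ε : ℝ≥0∞} (hε : 0 < ε) :
    ∃ η > 0, ∀ g : X → ℝ, AEMeasurable g μ → olNorm φ h μ g < η →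
      μ {x | (δ : ℝ≥0∞) < ENNReal.ofReal |g x|} < ε := by
  rcases eq_or_ne (μ univ) 0 with h0 | h0
  · refine ⟨1, one_pos, fun g _ _ => ?_⟩
    rwa [measure_mono_null (subset_univ _) h0]
  have hμ : 0 < μ univ := pos_iff_ne_zero.2 h0
  have hW := hh.weightInt_pos hμ hε
  obtain ⟨N, hN⟩ := eventually_atTop.1
    (hφ.tendsto_top.eventually_const_lt (ENNReal.inv_lt_top.2 hW))
  set N' : ℝ≥0 := max N 1 with hN'
  have hN0 : 0 < N' := lt_of_lt_of_le one_pos (le_max_right _ _)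
  -- If `l < δ / N'` then `δ / l ≥ N'`, where `φ` already exceeds `1 / ∫₀^ε h`.
  refine ⟨((δ / N' : ℝ≥0) : ℝ≥0∞), by exact_mod_cast div_pos hδ hN0, fun g hg hlt => ?_⟩
  obtain ⟨l, ⟨hl0, hl1⟩, hlt⟩ := sInf_lt_iff.1 hlt
  by_contra hcon
  rw [not_lt] at hcon
  set m := μ {x | (δ : ℝ≥0∞) < ENNReal.ofReal |g x|} with hm
  have hms : MeasurableSet {t : ℝ | 0 < t ∧ ENNReal.ofReal t < m} :=
    measurableSet_Ioi.inter (measurableSet_lt ENNReal.measurable_ofReal measurable_const)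
  have hNl : (N' : ℝ≥0∞) ≤ l⁻¹ * δ := by
    lift l to ℝ≥0 using (hlt.trans ENNReal.coe_lt_top).ne
    have hl0' : 0 < l := by exact_mod_cast hl0
    have hlt' : l < δ / N' := by exact_mod_cast hlt
    rw [← ENNReal.coe_inv hl0'.ne', ← ENNReal.coe_mul, ENNReal.coe_le_coe]
    rw [lt_div_iff₀ hN0] at hlt'
    rw [inv_mul_eq_div, le_div_iff₀ hl0', mul_comm]
    exact hlt'.le
  have h1 : φ N' * weightInt h m ≤ olModular φ h μ g l⁻¹ := by
    rw [weightInt, ← lintegral_const_mul _ hh.measurable]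
    refine (setLIntegral_mono' hms fun t ht => ?_).trans
      (lintegral_mono_set (t := {t : ℝ | 0 < t ∧ ENNReal.ofReal t < μ univ}) fun _ ht =>
        ⟨ht.1, ht.2.trans_le (measure_mono (subset_univ _))⟩)
    gcongr
    refine hφ.mono (hNl.trans ?_) ?_
    · gcongr
      exact le_decRearr ht.2
    · exact ENNReal.mul_ne_top (ENNReal.inv_ne_top.2 hl0.ne') (decRearr_lt_top hg ht.1).ne
  have h2 : weightInt h ε ≤ weightInt h m := weightInt_mono h hcon
  have h3 : 1 < φ N' * weightInt h m := by
    have hWt : weightInt h m < ⊤ :=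
      (weightInt_mono h (measure_mono (subset_univ _))).trans_lt hh.weightInt_lt_top
    have h4 := hN N' (le_max_left _ _)
    have h5 : (weightInt h m)⁻¹ < φ N' := (ENNReal.inv_le_inv.2 h2).trans_lt h4
    have h6 := ENNReal.mul_lt_mul_left (hW.trans_le h2).ne' hWt.ne h5
    rwa [ENNReal.inv_mul_cancel (hW.trans_le h2).ne' hWt.ne] at h6
  exact absurd (h3.trans_le (h1.trans hl1)) (lt_irrefl _)

lemma olModular_indicator_le [MeasurableSpace X] {μ : Measure X} {φ : ℝ≥0∞ → ℝ≥0∞}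
    {h : ℝ → ℝ≥0∞} (hφ : IsOrliczFunction φ) (hh : IsWeight μ h) (B : Set X) (c : ℝ) {k : ℝ≥0∞}
    (hk : k ≠ ⊤) :
    olModular φ h μ (B.indicator fun _ => c) k
      ≤ φ (k * ENNReal.ofReal |c|) * weightInt h (μ B) := by
  have hms : ∀ m : ℝ≥0∞, MeasurableSet {t : ℝ | 0 < t ∧ ENNReal.ofReal t < m} := fun m =>
    measurableSet_Ioi.inter (measurableSet_lt ENNReal.measurable_ofReal measurable_const)
  rw [weightInt, ← lintegral_const_mul _ hh.measurable, olModular,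
    ← lintegral_indicator (hms _), ← lintegral_indicator (hms _)]
  refine lintegral_mono fun t => ?_
  by_cases ht : t ∈ {t : ℝ | 0 < t ∧ ENNReal.ofReal t < μ univ}
  swap
  · rw [indicator_of_notMem ht]; exact zero_le
  rw [indicator_of_mem ht]
  by_cases htB : ENNReal.ofReal t < μ B
  · rw [indicator_of_mem (show t ∈ {t : ℝ | 0 < t ∧ ENNReal.ofReal t < μ B} from ⟨ht.1, htB⟩)]
    gcongr
    refine hφ.mono ?_ (ENNReal.mul_ne_top hk ENNReal.ofReal_ne_top)
    gcongr
    refine sInf_le ?_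
    have : {x | ENNReal.ofReal |c| < ENNReal.ofReal |B.indicator (fun _ => c) x|} = ∅ := by
      refine eq_empty_of_forall_notMem fun x hx => ?_
      refine absurd hx (not_lt.2 (ENNReal.ofReal_le_ofReal ?_))
      by_cases hxB : x ∈ B <;> simp [hxB]
    simp [this]
  · have h0 : decRearr μ (B.indicator fun _ => c) t = 0 := by
      refine le_antisymm (sInf_le ?_) zero_le
      refine le_trans (measure_mono fun x hx => ?_) (not_lt.1 htB)
      by_contra hxB
      simp [hxB] at hx
    rw [h0, mul_zero, hφ.map_zero, zero_mul]
    exact zero_le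

lemma memOL_indicator [MeasurableSpace X] {μ : Measure X} [IsFiniteMeasure μ]
    {φ : ℝ≥0∞ → ℝ≥0∞} {h : ℝ → ℝ≥0∞} (hφ : IsOrliczFunction φ) (hΔ : Delta2All φ)
    (hh : IsWeight μ h) {B : Set X} (hB : MeasurableSet B) (c : ℝ) :
    MemOL φ h μ (B.indicator fun _ => c) := by
  refine ⟨(measurable_const.indicator hB).aemeasurable, 1, one_pos, ?_⟩
  refine (olModular_indicator_le hφ hh B c ENNReal.coe_ne_top).trans_lt ?_
  refine ENNReal.mul_lt_top ?_
    ((weightInt_mono h (measure_mono (subset_univ _))).trans_lt hh.weightInt_lt_top)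
  rw [ENNReal.coe_one, one_mul]
  exact hφ.lt_top hΔ |c|.toNNReal

/-- Multiples of indicators of sets of small measure have small norm. -/
lemma exists_measure_lt_imp [MeasurableSpace X] {μ : Measure X} [IsFiniteMeasure μ]
    {φ : ℝ≥0∞ → ℝ≥0∞} {h : ℝ → ℝ≥0∞} (hφ : IsOrliczFunction φ) (hΔ : Delta2All φ)
    (hh : IsWeight μ h) (c : ℝ) {ε : ℝ≥0} (hε : 0 < ε) :
    ∃ δ > 0, ∀ B : Set X, μ B < δ → olNorm φ h μ (B.indicator fun _ => c) ≤ ε := by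
  have hfin : φ ((ε : ℝ≥0∞)⁻¹ * ENNReal.ofReal |c|) < ⊤ := by
    rw [← ENNReal.coe_inv hε.ne', ENNReal.ofReal, ← ENNReal.coe_mul]
    exact hφ.lt_top hΔ _
  obtain ⟨δ, hδ, hd⟩ := hh.weightInt_small (ENNReal.inv_pos.2 hfin.ne)
  refine ⟨δ, hδ, fun B hB => sInf_le ⟨by exact_mod_cast hε, ?_⟩⟩
  refine (olModular_indicator_le hφ hh B c
    (ENNReal.inv_ne_top.2 (by exact_mod_cast hε.ne'))).trans ?_
  calc _ ≤ φ ((ε : ℝ≥0∞)⁻¹ * ENNReal.ofReal |c|) * (φ ((ε : ℝ≥0∞)⁻¹ * ENNReal.ofReal |c|))⁻¹ := by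
        gcongr
        exact (hd _ (measure_mono (subset_univ _)) hB).le
    _ ≤ 1 := ENNReal.mul_inv_le_one _

/-! ### Li–Yorke behaviour and small preimages -/

/-- An orbit whose norms come arbitrarily close to `0` yields a level set with small preimages. -/
lemma exists_preSmall_of_liminf [MeasurableSpace X] {μ : Measure X} [IsFiniteMeasure μ]
    {τ : X → X} {φ : ℝ≥0∞ → ℝ≥0∞} {h : ℝ → ℝ≥0∞}
    (hq : Measure.QuasiMeasurePreserving τ μ μ) (hφ : IsOrliczFunction φ)
    (hh : IsWeight μ h) {g : X → ℝ} (hg : AEMeasurable g μ) (hg0 : ¬ g =ᵐ[μ] (0 : X → ℝ))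
    (hl : liminf (fun n : ℕ => olNorm φ h μ (g ∘ τ^[n])) atTop = 0) :
    ∃ A : Set X, MeasurableSet A ∧ 0 < μ A ∧ PreSmall μ τ A := by
  set f := hg.mk g with hf
  have hfg : g =ᵐ[μ] f := hg.ae_eq_mk
  obtain ⟨n, hn⟩ : ∃ n : ℕ, 0 < μ {x | (((n : ℝ≥0) + 1)⁻¹ : ℝ≥0) < ENNReal.ofReal |f x|} := by
    by_contra hcon
    simp only [not_exists, not_lt, nonpos_iff_eq_zero] at hcon
    refine hg0 (hfg.trans ?_)
    have hnull : μ (⋃ n : ℕ, {x | (((n : ℝ≥0) + 1)⁻¹ : ℝ≥0) < ENNReal.ofReal |f x|}) = 0 :=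
      measure_iUnion_null hcon
    refine measure_mono_null (fun x hx => ?_) hnull
    have hx' : 0 < |f x| := abs_pos.2 hx
    obtain ⟨n, hn⟩ := exists_nat_one_div_lt hx'
    refine mem_iUnion.2 ⟨n, ?_⟩
    rw [mem_ofPred_eq, ENNReal.lt_ofReal_iff_toReal_lt ENNReal.coe_ne_top, ENNReal.coe_toReal]
    simpa using hn
  refine ⟨_, measurableSet_lt measurable_const
    (hg.measurable_mk.norm.ennreal_ofReal), hn, fun ε hε => ?_⟩
  obtain ⟨η, hη, hd⟩ := exists_norm_lt_imp (μ := μ) hφ hh (δ := ((n : ℝ≥0) + 1)⁻¹)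
    (by positivity) hε
  have hfr := frequently_lt_of_liminf_lt (by isBoundedDefault) (hl.trans_lt hη)
  refine hfr.mono fun m hm => ?_
  have h1 := hd _ (hg.comp_quasiMeasurePreserving (hq.iterate m)) hm
  refine lt_of_eq_of_lt (measure_congr ?_) h1
  have h2 : f ∘ τ^[m] =ᵐ[μ] g ∘ τ^[m] := (hq.iterate m).ae_eq_comp hfg.symm
  refine h2.mono fun x hx => ?_
  simp only [Function.comp_apply] at hx
  apply propext
  change (_ < ENNReal.ofReal |f (τ^[m] x)|) ↔ (_ < ENNReal.ofReal |(g ∘ τ^[m]) x|)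
  rw [hx, Function.comp_apply]

lemma liminf_norm_indicator [MeasurableSpace X] {μ : Measure X} [IsFiniteMeasure μ]
    {τ : X → X} {φ : ℝ≥0∞ → ℝ≥0∞} {h : ℝ → ℝ≥0∞}
    (hφ : IsOrliczFunction φ) (hΔ : Delta2All φ)
    (hh : IsWeight μ h) {A : Set X} (hA : PreSmall μ τ A) (c : ℝ) :
    liminf (fun n : ℕ => olNorm φ h μ ((A.indicator fun _ => c) ∘ τ^[n])) atTop = 0 := by
  refine le_antisymm (ENNReal.le_of_forall_pos_le_add fun ε hε _ => ?_) zero_le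
  obtain ⟨δ, hδ, hd⟩ := exists_measure_lt_imp hφ hΔ hh c hε
  rw [zero_add]
  exact liminf_le_of_frequently_le ((hA δ hδ).mono fun n hn => hd _ hn) (by isBoundedDefault)

lemma limsup_norm_indicator [MeasurableSpace X] {μ : Measure X} [IsFiniteMeasure μ]
    {τ : X → X} {φ : ℝ≥0∞ → ℝ≥0∞} {h : ℝ → ℝ≥0∞} (hτ : Measurable τ)
    (hφ : IsOrliczFunction φ)
    (hh : IsWeight μ h) {A : Set X} (hAm : MeasurableSet A) {δ : ℝ≥0∞} (hδ : 0 < δ)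
    (hA : ∃ᶠ n : ℕ in atTop, δ ≤ μ (τ^[n] ⁻¹' A)) {c : ℝ} (hc : c ≠ 0) :
    0 < limsup (fun n : ℕ => olNorm φ h μ ((A.indicator fun _ => c) ∘ τ^[n])) atTop := by
  have hc' : 0 < |c| := abs_pos.2 hc
  obtain ⟨η, hη, hd⟩ := exists_norm_lt_imp (μ := μ) hφ hh (δ := (|c| / 2).toNNReal)
    (Real.toNNReal_pos.2 (half_pos hc')) hδ
  refine lt_of_lt_of_le hη (le_limsup_of_frequently_le (hA.mono fun n hn => ?_)
    (by isBoundedDefault))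
  by_contra hlt
  refine absurd (hd _ ((measurable_const.indicator hAm).comp (hτ.iterate n)).aemeasurable
    (not_le.1 hlt)) (not_lt.2 (hn.trans (measure_mono fun x hx => ?_)))
  have hx' : τ^[n] x ∈ A := hx
  simp only [mem_ofPred_eq, Function.comp_apply, indicator_of_mem hx']
  exact (ENNReal.ofReal_lt_ofReal_iff hc').2 (half_lt_self hc')

lemma not_ae_zero_indicator [MeasurableSpace X] {μ : Measure X} {A : Set X} (hA : 0 < μ A) {c : ℝ}
    (hc : c ≠ 0) : ¬ (A.indicator fun _ => c) =ᵐ[μ] (0 : X → ℝ) := by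
  intro h0
  refine hA.ne' (measure_mono_null (fun x hx => ?_) h0)
  simpa [hx] using hc

/-- If the preimages of `A` are infinitely often small but do not tend to zero in measure, then the
line spanned by the indicator of `A` is a Li–Yorke scrambled set. -/
lemma liYorkeOL_of_oscillating [MeasurableSpace X] {μ : Measure X} [IsFiniteMeasure μ]
    {τ : X → X} {φ : ℝ≥0∞ → ℝ≥0∞} {h : ℝ → ℝ≥0∞} (hτ : Measurable τ)
    (hφ : IsOrliczFunction φ) (hΔ : Delta2All φ) (hh : IsWeight μ h) {A : Set X}
    (hAm : MeasurableSet A) (hA0 : 0 < μ A) (hA : PreSmall μ τ A) {δ : ℝ≥0∞} (hδ : 0 < δ)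
    (hAδ : ∃ᶠ n : ℕ in atTop, δ ≤ μ (τ^[n] ⁻¹' A)) : LiYorkeOL φ h μ τ := by
  have hsub : ∀ c d : ℝ, (A.indicator fun _ => c) - (A.indicator fun _ => d)
      = A.indicator fun _ => c - d := fun c d => by
    ext x; by_cases hx : x ∈ A <;> simp [hx]
  have hinj : Function.Injective fun c : ℝ => A.indicator fun _ => c := by
    obtain ⟨x, hx⟩ := nonempty_of_measure_ne_zero hA0.ne'
    intro c d hcd
    simpa [hx] using congrFun hcd x
  refine ⟨range fun c : ℝ => A.indicator fun _ => c, ?_, ?_, ?_, ?_⟩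
  · rintro _ ⟨c, rfl⟩
    exact memOL_indicator hφ hΔ hh hAm c
  · intro hcount
    refine Cardinal.not_countable_real ?_
    rw [← image_univ] at hcount
    exact (countable_of_injective_of_countable_image hinj.injOn hcount)
  · rintro _ ⟨c, rfl⟩ _ ⟨d, rfl⟩ hne hae
    have hcd : c - d ≠ 0 := sub_ne_zero.2 fun hcd => hne (by rw [hcd])
    refine not_ae_zero_indicator hA0 hcd ?_
    rw [← hsub]
    filter_upwards [hae] with x hx
    simp only [Pi.sub_apply, Pi.zero_apply, hx, sub_self]
  · rintro _ ⟨c, rfl⟩ _ ⟨d, rfl⟩ hne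
    have hcd : c - d ≠ 0 := sub_ne_zero.2 fun hcd => hne (by rw [hcd])
    simp only [hsub]
    exact ⟨liminf_norm_indicator hφ hΔ hh hA _,
      limsup_norm_indicator hτ hφ hh hAm hδ hAδ hcd⟩

/-- Equivalent characterizations of Li-Yorke chaos for the composition operator `C_τ`
on `L^{φ,h}(μ)` over a finite measure space, with `τ` injective. -/
theorem stmt_4 {X : Type*} [MeasurableSpace X] (μ : Measure X) [IsFiniteMeasure μ]
    (τ : X → X) (φ : ℝ≥0∞ → ℝ≥0∞) (h : ℝ → ℝ≥0∞)
    (hτ : NonSingular μ τ) (hinj : Function.Injective τ)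
    (himg : ∀ B : Set X, MeasurableSet B → MeasurableSet (τ '' B))
    (hφ : IsOrliczFunction φ) (hΔ : Delta2All φ)
    (hh : IsWeight μ h) (hbd : CompBoundedOL φ h μ τ) :
    List.TFAE [
      -- (a)
      LiYorkeOL φ h μ τ,
      -- (b)
      ∃ g : X → ℝ, MemOL φ h μ g ∧ ¬ g =ᵐ[μ] (0 : X → ℝ) ∧
        Filter.liminf (fun n : ℕ => olNorm φ h μ (g ∘ τ^[n])) Filter.atTop = 0,
      -- (c)
      ∃ A : Set X, MeasurableSet A ∧ 0 < μ A ∧ μ A < ⊤ ∧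
        Filter.limsup
          (fun n : ℕ => orliczInv φ (weightInt h (μ ((τ^[n]) ⁻¹' A)))⁻¹)
          Filter.atTop = ⊤,
      -- (d)
      ∃ A : Set X, MeasurableSet A ∧ 0 < μ A ∧ μ A < ⊤ ∧
        Filter.limsup
          (fun n : ℕ => orliczInv φ (weightInt h (μ ((τ^[n]) '' A)))⁻¹)
          Filter.atTop = ⊤,
      -- (e)
      ∃ A : Set X, MeasurableSet A ∧ 0 < μ A ∧ μ A < ⊤ ∧
        Filter.limsup
          (fun n : ℕ => orliczInv φ (weightInt h (μ ((τ^[n]) ⁻¹' A)))⁻¹)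
          Filter.atTop = ⊤ ∧
        Filter.limsup
          (fun n : ℕ => orliczInv φ (weightInt h (μ ((τ^[n]) '' A)))⁻¹)
          Filter.atTop = ⊤,
      -- (f)
      ∃ A : Set X, MeasurableSet A ∧ 0 < μ A ∧ μ A < ⊤ ∧
        0 < Filter.liminf
          (fun n : ℕ => orliczInv φ (weightInt h (μ ((τ^[n]) ⁻¹' A)))⁻¹)
          Filter.atTop ∧
        Filter.limsup
          (fun n : ℕ => orliczInv φ (weightInt h (μ ((τ^[n]) ⁻¹' A)))⁻¹)
          Filter.atTop = ⊤,
      -- (g)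
      ∃ A : Set X, MeasurableSet A ∧ 0 < μ A ∧ μ A < ⊤ ∧
        SemiIrregularOL φ h μ τ (A.indicator fun _ => (1 : ℝ))
    ] := by
  have hq : Measure.QuasiMeasurePreserving τ μ μ :=
    ⟨hτ.1, Measure.AbsolutelyContinuous.mk fun s hs h0 => by
      rw [Measure.map_apply hτ.1 hs]; exact hτ.2 s hs h0⟩
  have hpos : ∀ {A : Set X}, 0 < μ A → 0 < μ univ := fun hA =>
    hA.trans_le (measure_mono (subset_univ _))
  have hpre : ∀ {A : Set X}, 0 < μ A →
      (limsup (fun n : ℕ => orliczInv φ (weightInt h (μ (τ^[n] ⁻¹' A)))⁻¹) atTop = ⊤ ↔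
        PreSmall μ τ A) := fun hA =>
    limsup_orliczInv_eq_top_iff hφ hΔ hh (hpos hA) fun _ => measure_mono (subset_univ _)
  have himgs : ∀ {A : Set X}, 0 < μ A →
      (limsup (fun n : ℕ => orliczInv φ (weightInt h (μ (τ^[n] '' A)))⁻¹) atTop = ⊤ ↔
        ImgSmall μ τ A) := fun hA =>
    limsup_orliczInv_eq_top_iff hφ hΔ hh (hpos hA) fun _ => measure_mono (subset_univ _)
  have hosc : ∀ {A : Set X}, MeasurableSet A → 0 < μ A → PreSmall μ τ A → ImgSmall μ τ A →
      ∃ A : Set X, MeasurableSet A ∧ 0 < μ A ∧ PreSmall μ τ A ∧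
        ∃ δ > 0, ∃ᶠ n : ℕ in atTop, δ ≤ μ (τ^[n] ⁻¹' A) := fun hAm hA0 h1 h2 =>
    exists_oscillating hq hinj himg hAm hA0 h1 h2
  tfae_have 1 → 3 := by
    rintro ⟨S, hS, hcount, hne, hLY⟩
    have hnt : S.Nontrivial := by
      by_contra hcon
      exact hcount (not_nontrivial_iff.1 hcon).countable
    obtain ⟨p, hp, q, hq', hpq⟩ := hnt
    have hae : ¬ p - q =ᵐ[μ] (0 : X → ℝ) := fun h0 => hne p hp q hq' hpq <| by
      filter_upwards [h0] with x hx
      exact sub_eq_zero.1 hx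
    obtain ⟨A, hAm, hA0, hA⟩ := exists_preSmall_of_liminf hq hφ hh
      ((hS p hp).1.sub (hS q hq').1) hae (hLY p hp q hq' hpq).1
    exact ⟨A, hAm, hA0, measure_lt_top _ _, (hpre hA0).2 hA⟩
  tfae_have 2 → 3 := by
    rintro ⟨g, hg, hg0, hl⟩
    obtain ⟨A, hAm, hA0, hA⟩ := exists_preSmall_of_liminf hq hφ hh hg.1 hg0 hl
    exact ⟨A, hAm, hA0, measure_lt_top _ _, (hpre hA0).2 hA⟩
  tfae_have 7 → 2 := by
    rintro ⟨A, hAm, hA0, -, hmem, hl, -⟩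
    exact ⟨_, hmem, not_ae_zero_indicator hA0 one_ne_zero, hl⟩
  tfae_have 3 → 6 := by
    rintro ⟨A, hAm, hA0, hAt, hl⟩
    refine ⟨A, hAm, hA0, hAt, ?_, hl⟩
    -- All terms are bounded below by the value at `μ univ`.
    refine lt_of_lt_of_le (hφ.orliczInv_pos (ENNReal.inv_pos.2 hh.weightInt_lt_top.ne))
      (le_liminf_of_le (by isBoundedDefault) (Eventually.of_forall fun n => ?_))
    exact orliczInv_mono φ (ENNReal.inv_le_inv.2 (weightInt_mono h (measure_mono (subset_univ _))))
  tfae_have 6 → 3 := by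
    rintro ⟨A, hAm, hA0, hAt, -, hl⟩
    exact ⟨A, hAm, hA0, hAt, hl⟩
  tfae_have 3 → 5 := by
    rintro ⟨A, hAm, hA0, -, hl⟩
    obtain ⟨B, a, hBm, hB0, ha, hw⟩ :=
      ((hpre hA0).1 hl).exists_weaklyWandering hq hAm hA0
    exact ⟨B, hBm, hB0, measure_lt_top _ _, (hpre hB0).2 (hw.preSmall hτ.1 ha hBm),
      (himgs hB0).2 (hw.imgSmall hinj himg ha hBm)⟩
  tfae_have 4 → 5 := by
    rintro ⟨A, hAm, hA0, -, hl⟩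
    obtain ⟨B, a, hBm, hB0, ha, hw⟩ :=
      ((himgs hA0).1 hl).exists_weaklyWandering hq hinj himg hAm hA0
    exact ⟨B, hBm, hB0, measure_lt_top _ _, (hpre hB0).2 (hw.preSmall hτ.1 ha hBm),
      (himgs hB0).2 (hw.imgSmall hinj himg ha hBm)⟩
  tfae_have 5 → 4 := by
    rintro ⟨A, hAm, hA0, hAt, -, hl⟩
    exact ⟨A, hAm, hA0, hAt, hl⟩
  tfae_have 5 → 7 := by
    rintro ⟨W, hWm, hW0, -, h1, h2⟩
    obtain ⟨A, hAm, hA0, hA, δ, hδ, hAδ⟩ := hosc hWm hW0 ((hpre hW0).1 h1) ((himgs hW0).1 h2)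
    exact ⟨A, hAm, hA0, measure_lt_top _ _, memOL_indicator hφ hΔ hh hAm 1,
      liminf_norm_indicator hφ hΔ hh hA 1,
      limsup_norm_indicator hτ.1 hφ hh hAm hδ hAδ one_ne_zero⟩
  tfae_have 5 → 1 := by
    rintro ⟨W, hWm, hW0, -, h1, h2⟩
    obtain ⟨A, hAm, hA0, hA, δ, hδ, hAδ⟩ := hosc hWm hW0 ((hpre hW0).1 h1) ((himgs hW0).1 h2)
    exact liYorkeOL_of_oscillating hτ.1 hφ hΔ hh hAm hA0 hA hδ hAδ
  tfae_finish


end
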